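/- Let ι be a finite type, F the flip matrix on index type ι × ι, and R : Matrix (ι × ι) (ι × ι) ℂ an arbitrary matrix. Set Φ := F * R. Then on the triple index type ι × ι × ι one has the identity Φ₁₂ * Φ₂₃ * Φ₁₂ = (F₁₂ * F₂₃ * F₁₂) * (R₂₃ * R₁₃ * R₁₂). -/

import Mathlib

/-!
Multiplication by `F₁₂` or `F₂₃`, on either side, permutes the triple index by a transposition of
positions. Hence the flips move past the placements of `R` by relabelling positions:
`R₁₂ F₂₃ = F₂₃ R₁₃`, `R₂₃ F₁₂ = F₁₂ R₁₃` and `R₁₃ F₁₂ = F₁₂ R₂₃`. Since placement is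
multiplicative, `Φ₁₂ Φ₂₃ Φ₁₂ = F₁₂ R₁₂ F₂₃ R₂₃ F₁₂ R₁₂`, and pushing all flips to the left gives
`F₁₂ F₂₃ F₁₂ R₂₃ R₁₃ R₁₂`.
-/

open Matrix

noncomputable section

/-- The flip matrix on index type `ι × ι`. -/
def flipM (ι : Type*) [DecidableEq ι] : Matrix (ι × ι) (ι × ι) ℂ :=
  fun p q => if p.1 = q.2 ∧ p.2 = q.1 then 1 else 0

/-- Placement of a matrix on positions (1,2) of the triple index type `ι × ι × ι`. -/
def pl12 {ι : Type*} [DecidableEq ι] (A : Matrix (ι × ι) (ι × ι) ℂ) :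
    Matrix (ι × ι × ι) (ι × ι × ι) ℂ :=
  fun x y => if x.2.2 = y.2.2 then A (x.1, x.2.1) (y.1, y.2.1) else 0

/-- Placement of a matrix on positions (1,3) of the triple index type `ι × ι × ι`. -/
def pl13 {ι : Type*} [DecidableEq ι] (A : Matrix (ι × ι) (ι × ι) ℂ) :
    Matrix (ι × ι × ι) (ι × ι × ι) ℂ :=
  fun x y => if x.2.1 = y.2.1 then A (x.1, x.2.2) (y.1, y.2.2) else 0

/-- Placement of a matrix on positions (2,3) of the triple index type `ι × ι × ι`. -/
def pl23 {ι : Type*} [DecidableEq ι] (A : Matrix (ι × ι) (ι × ι) ℂ) :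
    Matrix (ι × ι × ι) (ι × ι × ι) ℂ :=
  fun x y => if x.1 = y.1 then A (x.2.1, x.2.2) (y.2.1, y.2.2) else 0

section Placement

variable {ι : Type*} [Fintype ι] [DecidableEq ι]

lemma pl12_mul (A B : Matrix (ι × ι) (ι × ι) ℂ) : pl12 (A * B) = pl12 A * pl12 B := by
  ext ⟨a, b, c⟩ ⟨d, e, f⟩
  simp only [pl12, mul_apply, Fintype.sum_prod_type, ite_mul, zero_mul, Finset.sum_ite_eq,
    Finset.mem_univ, if_true]
  split_ifs <;> simp

lemma pl23_mul (A B : Matrix (ι × ι) (ι × ι) ℂ) : pl23 (A * B) = pl23 A * pl23 B := by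
  ext ⟨a, b, c⟩ ⟨d, e, f⟩
  rw [mul_apply, Fintype.sum_prod_type, Fintype.sum_eq_single a]
  · by_cases h : a = d <;> simp [pl23, mul_apply, h]
  · intro x hx
    simp [pl23, hx.symm]

lemma pl12_flipM_mul_apply (M : Matrix (ι × ι × ι) (ι × ι × ι) ℂ) (a b c : ι) (y : ι × ι × ι) :
    (pl12 (flipM ι) * M) (a, b, c) y = M (b, a, c) y := by
  rw [mul_apply, Finset.sum_eq_single (b, a, c)]
  · simp [pl12, flipM]
  · rintro ⟨d, e, f⟩ _ h
    simp only [pl12, flipM]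
    grind
  · simp

lemma pl23_flipM_mul_apply (M : Matrix (ι × ι × ι) (ι × ι × ι) ℂ) (a b c : ι) (y : ι × ι × ι) :
    (pl23 (flipM ι) * M) (a, b, c) y = M (a, c, b) y := by
  rw [mul_apply, Finset.sum_eq_single (a, c, b)]
  · simp [pl23, flipM]
  · rintro ⟨d, e, f⟩ _ h
    simp only [pl23, flipM]
    grind
  · simp

lemma mul_pl12_flipM_apply (M : Matrix (ι × ι × ι) (ι × ι × ι) ℂ) (x : ι × ι × ι) (a b c : ι) :
    (M * pl12 (flipM ι)) x (a, b, c) = M x (b, a, c) := by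
  rw [mul_apply, Finset.sum_eq_single (b, a, c)]
  · simp [pl12, flipM]
  · rintro ⟨d, e, f⟩ _ h
    simp only [pl12, flipM]
    grind
  · simp

lemma mul_pl23_flipM_apply (M : Matrix (ι × ι × ι) (ι × ι × ι) ℂ) (x : ι × ι × ι) (a b c : ι) :
    (M * pl23 (flipM ι)) x (a, b, c) = M x (a, c, b) := by
  rw [mul_apply, Finset.sum_eq_single (a, c, b)]
  · simp [pl23, flipM]
  · rintro ⟨d, e, f⟩ _ h
    simp only [pl23, flipM]
    grind
  · simp

lemma pl12_mul_flip23 (R : Matrix (ι × ι) (ι × ι) ℂ) :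
    pl12 R * pl23 (flipM ι) = pl23 (flipM ι) * pl13 R := by
  ext ⟨a, b, c⟩ ⟨d, e, f⟩
  rw [mul_pl23_flipM_apply, pl23_flipM_mul_apply]
  rfl

lemma pl23_mul_flip12 (R : Matrix (ι × ι) (ι × ι) ℂ) :
    pl23 R * pl12 (flipM ι) = pl12 (flipM ι) * pl13 R := by
  ext ⟨a, b, c⟩ ⟨d, e, f⟩
  rw [mul_pl12_flipM_apply, pl12_flipM_mul_apply]
  rfl

lemma pl13_mul_flip12 (R : Matrix (ι × ι) (ι × ι) ℂ) :
    pl13 R * pl12 (flipM ι) = pl12 (flipM ι) * pl23 R := by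
  ext ⟨a, b, c⟩ ⟨d, e, f⟩
  rw [mul_pl12_flipM_apply, pl12_flipM_mul_apply]
  rfl

end Placement

theorem stmt2 (ι : Type*) [Fintype ι] [DecidableEq ι]
    (R : Matrix (ι × ι) (ι × ι) ℂ) :
    pl12 (flipM ι * R) * pl23 (flipM ι * R) * pl12 (flipM ι * R) =
      (pl12 (flipM ι) * pl23 (flipM ι) * pl12 (flipM ι)) *
        (pl23 R * pl13 R * pl12 R) := by
  rw [pl12_mul, pl23_mul]
  calc pl12 (flipM ι) * pl12 R * (pl23 (flipM ι) * pl23 R) * (pl12 (flipM ι) * pl12 R)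
      = pl12 (flipM ι) * (pl12 R * pl23 (flipM ι)) * (pl23 R * pl12 (flipM ι)) * pl12 R := by
        simp only [Matrix.mul_assoc]
    _ = pl12 (flipM ι) * pl23 (flipM ι) * (pl13 R * pl12 (flipM ι)) * pl13 R * pl12 R := by
        rw [pl12_mul_flip23, pl23_mul_flip12]
        simp only [Matrix.mul_assoc]
    _ = _ := by
        rw [pl13_mul_flip12]
        simp only [Matrix.mul_assoc]
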